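/- Let G be a graph of order n and size m, and t a positive number with nt an integer and m ≤ nt ≤ 2m. Then Sdyn_t(G) = Pβ_{nt−m}(G): the minimum size of a τ-dynamic monopoly over all threshold assignments with average at least t equals the minimum size of a vertex set covering at least nt − m edges of G. -/

import Mathlib

open Finset

variable {V : Type*}

noncomputable section

/-- The set of edges of `G` covered by the vertex set `S` (i.e. incident with some vertex of `S`). -/
def coveredEdges (G : SimpleGraph V) [Fintype V] [DecidableEq V] [DecidableRel G.Adj]
    (S : Finset V) : Finset (Sym2 V) :=
  G.edgeFinset.filter (fun e => ∃ v ∈ S, v ∈ e)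

/-- `τ` is a valid threshold assignment: `0 ≤ τ v ≤ deg v`. -/
def validThresholds (G : SimpleGraph V) [Fintype V] [DecidableRel G.Adj] (τ : V → ℕ) : Prop :=
  ∀ v, τ v ≤ G.degree v

/-- `M` is a `τ`-static monopoly: every vertex outside `M` has at least `τ v` neighbors in `M`. -/
def isMonopoly (G : SimpleGraph V) [Fintype V] [DecidableEq V] [DecidableRel G.Adj]
    (τ : V → ℕ) (M : Finset V) : Prop :=
  ∀ v ∉ M, τ v ≤ (G.neighborFinset v ∩ M).card

/-- One activation step: add all vertices with at least `τ v` neighbors among active vertices. -/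
def dynStep (G : SimpleGraph V) [Fintype V] [DecidableEq V] [DecidableRel G.Adj]
    (τ : V → ℕ) (A : Finset V) : Finset V :=
  A ∪ Finset.univ.filter (fun v => τ v ≤ (G.neighborFinset v ∩ A).card)

/-- `D` is a `τ`-dynamic monopoly: iterating activation from `D` reaches all vertices. -/
def isDynMonopoly (G : SimpleGraph V) [Fintype V] [DecidableEq V] [DecidableRel G.Adj]
    (τ : V → ℕ) (D : Finset V) : Prop :=
  ∃ k, (dynStep G τ)^[k] D = Finset.univ

/-- `Pbeta G s`: minimum size of a vertex set covering at least `s` edges of `G`. -/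
def Pbeta (G : SimpleGraph V) [Fintype V] [DecidableEq V] [DecidableRel G.Adj] (s : ℕ) : ℕ :=
  sInf {c | ∃ S : Finset V, S.card = c ∧ s ≤ (coveredEdges G S).card}

/-- `Smon G t`: minimum size of a `τ`-static monopoly over all valid `τ` with average at least `t`. -/
def Smon (G : SimpleGraph V) [Fintype V] [DecidableEq V] [DecidableRel G.Adj] (t : ℝ) : ℕ :=
  sInf {c | ∃ (τ : V → ℕ) (M : Finset V), validThresholds G τ ∧
    (Fintype.card V : ℝ) * t ≤ ∑ v, (τ v : ℝ) ∧ isMonopoly G τ M ∧ M.card = c}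

/-- `Sdyn G t`: minimum size of a `τ`-dynamic monopoly over all valid `τ` with average at least `t`. -/
def Sdyn (G : SimpleGraph V) [Fintype V] [DecidableEq V] [DecidableRel G.Adj] (t : ℝ) : ℕ :=
  sInf {c | ∃ (τ : V → ℕ) (D : Finset V), validThresholds G τ ∧
    (Fintype.card V : ℝ) * t ≤ ∑ v, (τ v : ℝ) ∧ isDynMonopoly G τ D ∧ D.card = c}

/-!
Assign a rank to every vertex, and let the threshold of a vertex `v ∉ D` be the number of its
neighbors of smaller rank and that of `v ∈ D` its degree. Ranking vertices by activation time shows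
that the thresholds of any dynamic monopoly `D` are dominated by such an assignment; conversely,
such an assignment makes `D` a dynamic monopoly as soon as `D` contains the vertices of rank `0`.
Summing over the edges, an edge meeting `D` contributes at most `2` and any other edge at most `1`,
with equality when `D` comes first and the remaining vertices have distinct ranks. Hence the largest
total threshold for which `D` is a dynamic monopoly is `m` plus the number of edges covered by `D`.
-/

section DartSum

variable {M : Type*} [AddCommMonoid M] (G : SimpleGraph V) [Fintype V] [DecidableRel G.Adj]

lemma sum_sum_neighborFinset_eq_sum_dart (w : V → V → M) :
    ∑ v, ∑ u ∈ G.neighborFinset v, w v u = ∑ d : G.Dart, w d.fst d.snd := by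
  have := Classical.decEq V
  rw [← sum_fiberwise univ (fun d : G.Dart => d.fst)]
  refine sum_congr rfl fun v _ => ?_
  rw [SimpleGraph.dart_fst_fiber, sum_image (G.dartOfNeighborSet_injective v).injOn]
  exact sum_subtype _ (fun u => G.mem_neighborFinset v u) _

lemma sum_dart_eq_sum_edgeFinset (w : V → V → M) :
    ∑ d : G.Dart, w d.fst d.snd =
      ∑ e ∈ G.edgeFinset, Sym2.lift ⟨fun a b => w a b + w b a, fun _ _ => add_comm _ _⟩ e := by
  classical
  rw [← sum_fiberwise_of_maps_to (g := SimpleGraph.Dart.edge) (t := G.edgeFinset)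
    fun d _ => SimpleGraph.mem_edgeFinset.2 d.edge_mem]
  refine sum_congr rfl fun e he => ?_
  induction e with | _ a b
  let d : G.Dart := ⟨(a, b), SimpleGraph.mem_edgeFinset.1 he⟩
  have edge_fiber : ({d' : G.Dart | d'.edge = s(a, b)} : Finset _) = {d, d.symm} := d.edge_fiber
  rw [edge_fiber, sum_pair d.symm_ne.symm]
  rfl

end DartSum

lemma exists_mem_and_mem_sym2_mk_iff {D : Finset V} {a b : V} :
    (∃ v ∈ D, v ∈ s(a, b)) ↔ a ∈ D ∨ b ∈ D := by
  simp only [Sym2.mem_iff, and_or_left, exists_or, exists_eq_right]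

section Rank

variable (G : SimpleGraph V) [Fintype V] [DecidableEq V] [DecidableRel G.Adj]
  {α : Type*} [LinearOrder α] (D : Finset V) (r : V → α)

/-- The largest thresholds for which `D` can activate the other vertices in the order given by the
rank `r`: the full degree on `D`, and the number of neighbors of smaller rank elsewhere. -/
def rankThreshold (v : V) : ℕ :=
  #{u ∈ G.neighborFinset v | v ∈ D ∨ r u < r v}

lemma validThresholds_rankThreshold : validThresholds G (rankThreshold G D r) :=
  fun _ => card_filter_le _ _

lemma sum_rankThreshold :
    ∑ v, rankThreshold G D r v = ∑ e ∈ G.edgeFinset, Sym2.lift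
      ⟨fun a b => (if a ∈ D ∨ r b < r a then 1 else 0) + (if b ∈ D ∨ r a < r b then 1 else 0),
        fun _ _ => add_comm _ _⟩ e := by
  simp_rw [rankThreshold, card_filter]
  rw [sum_sum_neighborFinset_eq_sum_dart]
  exact sum_dart_eq_sum_edgeFinset G fun v u => if v ∈ D ∨ r u < r v then 1 else 0

lemma card_edgeFinset_add_card_coveredEdges :
    #G.edgeFinset + #(coveredEdges G D) =
      ∑ e ∈ G.edgeFinset, (1 + if ∃ v ∈ D, v ∈ e then 1 else 0) := by
  rw [sum_add_distrib, ← card_eq_sum_ones, coveredEdges, card_filter]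

lemma sum_rankThreshold_le :
    ∑ v, rankThreshold G D r v ≤ #G.edgeFinset + #(coveredEdges G D) := by
  rw [sum_rankThreshold, card_edgeFinset_add_card_coveredEdges]
  refine sum_le_sum fun e _ => ?_
  induction e with | _ a b
  simp only [Sym2.lift_mk, exists_mem_and_mem_sym2_mk_iff]
  grind

variable {G D r} in
lemma sum_rankThreshold_eq (lt_of_mem : ∀ u ∈ D, ∀ v ∉ D, r u < r v)
    (injOn_compl : Set.InjOn r (D : Set V)ᶜ) :
    ∑ v, rankThreshold G D r v = #G.edgeFinset + #(coveredEdges G D) := by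
  rw [sum_rankThreshold, card_edgeFinset_add_card_coveredEdges]
  refine sum_congr rfl fun e he => ?_
  induction e with | _ a b
  have ne_of_notMem (ha : a ∉ D) (hb : b ∉ D) : r a ≠ r b :=
    injOn_compl.ne ha hb (SimpleGraph.mem_edgeFinset.1 he).ne
  simp only [Sym2.lift_mk, exists_mem_and_mem_sym2_mk_iff]
  grind

end Rank

section Dynamics

variable {G : SimpleGraph V} [Fintype V] [DecidableEq V] [DecidableRel G.Adj]
  {τ : V → ℕ} {D : Finset V}

lemma mem_dynStep {A : Finset V} {v : V} :
    v ∈ dynStep G τ A ↔ v ∈ A ∨ τ v ≤ #(G.neighborFinset v ∩ A) := by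
  simp [dynStep]

variable (G τ D) in
/-- The first step of the activation process started at `D` in which `v` is active; it has the
junk value `0` if `v` never becomes active. -/
def activationTime (v : V) : ℕ :=
  sInf {k | v ∈ (dynStep G τ)^[k] D}

lemma activationTime_le {v : V} {k : ℕ} (hv : v ∈ (dynStep G τ)^[k] D) :
    activationTime G τ D v ≤ k :=
  Nat.sInf_le hv

lemma notMem_iterate_of_lt_activationTime {v : V} {k : ℕ} (hk : k < activationTime G τ D v) :
    v ∉ (dynStep G τ)^[k] D :=
  Nat.notMem_of_lt_sInf hk

lemma isDynMonopoly.mem_iterate_activationTime (hD : isDynMonopoly G τ D) (v : V) :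
    v ∈ (dynStep G τ)^[activationTime G τ D v] D :=
  Nat.sInf_mem (s := {k | v ∈ (dynStep G τ)^[k] D}) (hD.imp fun _ hk => by simp [hk])

lemma isDynMonopoly.le_rankThreshold_activationTime (hD : isDynMonopoly G τ D)
    (hτ : validThresholds G τ) (v : V) :
    τ v ≤ rankThreshold G D (activationTime G τ D) v := by
  by_cases hv : v ∈ D
  · simpa [rankThreshold, hv] using hτ v
  have active := hD.mem_iterate_activationTime v
  cases htime : activationTime G τ D v with
  | zero => exact absurd (by simpa only [htime, Function.iterate_zero_apply] using active) hv
  | succ k =>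
    have not_active_before : v ∉ (dynStep G τ)^[k] D :=
      notMem_iterate_of_lt_activationTime (htime ▸ k.lt_succ_self)
    rw [htime, Function.iterate_succ_apply', mem_dynStep] at active
    refine (active.resolve_left not_active_before).trans (card_le_card fun u hu => ?_)
    obtain ⟨hadj, hu_active⟩ := mem_inter.1 hu
    refine mem_filter.2 ⟨hadj, Or.inr ?_⟩
    exact htime ▸ Nat.lt_succ_of_le (activationTime_le hu_active)

lemma subset_iterate_dynStep (k : ℕ) : D ⊆ (dynStep G τ)^[k] D :=
  Function.id_le_iterate_of_id_le (fun _ => subset_union_left) k D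

variable {r : V → ℕ}

lemma mem_iterate_dynStep_of_rank_le (mem_of_rank_eq_zero : ∀ v, r v = 0 → v ∈ D)
    (hτ : ∀ v ∉ D, τ v ≤ rankThreshold G D r v) {k : ℕ} {v : V} (hv : r v ≤ k) :
    v ∈ (dynStep G τ)^[k] D := by
  induction k generalizing v with
  | zero => exact mem_of_rank_eq_zero v (Nat.le_zero.1 hv)
  | succ k ih =>
    by_cases hvD : v ∈ D
    · exact subset_iterate_dynStep _ hvD
    rw [Function.iterate_succ_apply', mem_dynStep]
    refine Or.inr ((hτ v hvD).trans (card_le_card fun u hu => ?_))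
    obtain ⟨hadj, hlt⟩ := mem_filter.1 hu
    have rank_lt : r u < r v := hlt.resolve_left hvD
    exact mem_inter.2 ⟨hadj, ih (Nat.le_of_lt_succ (rank_lt.trans_le hv))⟩

lemma isDynMonopoly_of_le_rankThreshold (mem_of_rank_eq_zero : ∀ v, r v = 0 → v ∈ D)
    (hτ : ∀ v ∉ D, τ v ≤ rankThreshold G D r v) : isDynMonopoly G τ D :=
  ⟨univ.sup r, eq_univ_of_forall fun v =>
    mem_iterate_dynStep_of_rank_le mem_of_rank_eq_zero hτ (le_sup (mem_univ v))⟩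

end Dynamics

lemma exists_rank_eq_zero_iff_mem_and_injOn_compl [Countable V] (D : Set V) :
    ∃ r : V → ℕ, (∀ v, r v = 0 ↔ v ∈ D) ∧ Set.InjOn r Dᶜ := by
  classical
  obtain ⟨index, index_injective⟩ := exists_injective_nat V
  refine ⟨fun v => if v ∈ D then 0 else index v + 1, fun v => by simp, fun u hu v hv huv => ?_⟩
  simpa [Set.notMem_of_mem_compl hu, Set.notMem_of_mem_compl hv, index_injective.eq_iff] using huv

section MaximalThresholds

variable (G : SimpleGraph V) [Fintype V] [DecidableEq V] [DecidableRel G.Adj]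

lemma exists_isDynMonopoly_sum_eq (D : Finset V) :
    ∃ τ, validThresholds G τ ∧ isDynMonopoly G τ D ∧
      ∑ v, τ v = #G.edgeFinset + #(coveredEdges G D) := by
  obtain ⟨r, rank_eq_zero_iff, injOn_compl⟩ :=
    exists_rank_eq_zero_iff_mem_and_injOn_compl (D : Set V)
  refine ⟨rankThreshold G D r, validThresholds_rankThreshold G D r,
    isDynMonopoly_of_le_rankThreshold (fun v => (rank_eq_zero_iff v).1) fun _ _ => le_rfl,
    sum_rankThreshold_eq (fun u hu v hv => ?_) injOn_compl⟩
  rw [(rank_eq_zero_iff u).2 hu]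
  exact Nat.pos_of_ne_zero (mt (rank_eq_zero_iff v).1 hv)

variable {G} in
lemma isDynMonopoly.sum_le {τ : V → ℕ} {D : Finset V} (hD : isDynMonopoly G τ D)
    (hτ : validThresholds G τ) :
    ∑ v, τ v ≤ #G.edgeFinset + #(coveredEdges G D) :=
  (sum_le_sum fun v _ => hD.le_rankThreshold_activationTime hτ v).trans
    (sum_rankThreshold_le G D _)

lemma exists_isDynMonopoly_le_sum_iff (D : Finset V) (s : ℕ) :
    (∃ τ, validThresholds G τ ∧ isDynMonopoly G τ D ∧ s ≤ ∑ v, τ v) ↔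
      s ≤ #G.edgeFinset + #(coveredEdges G D) := by
  constructor
  · rintro ⟨τ, hτ, hD, hs⟩
    exact hs.trans (hD.sum_le hτ)
  · intro hs
    obtain ⟨τ, hτ, hD, hsum⟩ := exists_isDynMonopoly_sum_eq G D
    exact ⟨τ, hτ, hD, hsum ▸ hs⟩

end MaximalThresholds

theorem stmt8 (G : SimpleGraph V) [Fintype V] [DecidableEq V] [DecidableRel G.Adj]
    (t : ℝ) (ht : 0 < t) (s : ℕ) (hst : (s : ℝ) = (Fintype.card V : ℝ) * t)
    (hm : G.edgeFinset.card ≤ s) (h2m : s ≤ 2 * G.edgeFinset.card) :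
    Sdyn G t = Pbeta G (s - G.edgeFinset.card) := by
  unfold Sdyn Pbeta
  congr 1
  ext c
  have average_iff (τ : V → ℕ) : (Fintype.card V : ℝ) * t ≤ ∑ v, (τ v : ℝ) ↔ s ≤ ∑ v, τ v := by
    rw [← hst]
    norm_cast
  simp only [Set.mem_ofPred_eq, average_iff, Nat.sub_le_iff_le_add',
    ← exists_isDynMonopoly_le_sum_iff]
  tauto
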